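/- Let n ≥ 1, let μ be a Borel probability measure on ℝ^{n×n} with bounded support, and let p ≥ 1 be an integer. Suppose the stochastic switched system Σ_μ is exponentially stable in pth mean (equivalently, ρ_{p,μ} < 1). Then for every γ ∈ (ρ_{p,μ}, 1) there exists a stochastic Lyapunov function for μ of degree p with growth rate γ; indeed, for a suitable positive integer k₀, the function V(x) := Σ_{k=0}^{k₀−1} E[‖A_k ⋯ A₁ x‖^p] / γ^{pk} (with the empty product equal to the identity matrix) is such a function, where A₁, A₂, … are i.i.d. with law μ. -/

import Mathlib

open MeasureTheory Filter Topology
open scoped ENNReal RealInnerProductSpace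

noncomputable section

/-- The space of real `n × n` matrices. -/
abbrev Mat (n : ℕ) := Matrix (Fin n) (Fin n) ℝ

/-- Euclidean space `ℝⁿ`. -/
abbrev EucSp (n : ℕ) := EuclideanSpace ℝ (Fin n)

/-- The (Borel = product) measurable structure on `n × n` real matrices. -/
instance matMeasurableSpace (n : ℕ) : MeasurableSpace (Mat n) :=
  inferInstanceAs (MeasurableSpace (Fin n → Fin n → ℝ))

/-- Lebesgue measure on the space of `n × n` real matrices `≅ ℝ^{n²}`. -/
def matLebesgue (n : ℕ) : Measure (Mat n) :=
  (inferInstance : MeasureSpace (Fin n → Fin n → ℝ)).volume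

/-- The operator norm (maximal singular value) of a real square matrix, induced by the
Euclidean norm. -/
def opNorm {m : ℕ} (A : Matrix (Fin m) (Fin m) ℝ) : ℝ :=
  ‖LinearMap.toContinuousLinearMap (Matrix.toEuclideanLin A)‖

/-- The product `A_k ⋯ A_1` of the matrices `f 0 = A_1, …, f (k-1) = A_k` (decreasing order of
indices). -/
def prodRev {m k : ℕ} (f : Fin k → Matrix (Fin m) (Fin m) ℝ) : Matrix (Fin m) (Fin m) ℝ :=
  ((List.ofFn f).reverse).prod

/-- The joint spectral radius of a set of matrices:
`ρ̂(M) = limsup_{k→∞} sup_{A₁,…,A_k ∈ M} ‖A_k ⋯ A₁‖^(1/k)`. -/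
def jsr {m : ℕ} (M : Set (Matrix (Fin m) (Fin m) ℝ)) : ℝ :=
  limsup (fun k : ℕ =>
    sSup {x : ℝ | ∃ f : Fin k → Matrix (Fin m) (Fin m) ℝ,
      (∀ i, f i ∈ M) ∧ x = opNorm (prodRev f)} ^ ((1 : ℝ) / k)) atTop

/-- `E[‖A_k ⋯ A₁‖^p]` where `A₁, …, A_k` are i.i.d. with law `μ`. -/
def kExpNorm {m : ℕ} (μ : Measure (Mat m)) (p k : ℕ) : ℝ :=
  ∫ f : Fin k → Mat m, opNorm (prodRev f) ^ p ∂(Measure.pi fun _ => μ)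

/-- The `L^p`-norm joint spectral radius (`p`-radius) of a probability distribution `μ`:
`ρ_{p,μ} = lim_{k→∞} (E[‖A_k ⋯ A₁‖^p])^{1/(pk)}`; since this limit exists for distributions
with bounded support, it coincides with the `limsup` used here. -/
def pRadius {m : ℕ} (μ : Measure (Mat m)) (p : ℕ) : ℝ :=
  limsup (fun k : ℕ => kExpNorm μ p k ^ (1 / (p * k : ℝ))) atTop

/-- The (topological) support of a measure on matrices. -/
def msupport {m : ℕ} (μ : Measure (Mat m)) : Set (Mat m) :=
  {A | ∀ ε : ℝ, 0 < ε → μ {B | opNorm (B - A) < ε} ≠ 0}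

/-- `μ` has bounded support. -/
def HasBoundedSupport {m : ℕ} (μ : Measure (Mat m)) : Prop :=
  ∃ C : ℝ, ∀ A ∈ msupport μ, opNorm A ≤ C

/-- A proper cone of `ℝⁿ`: a closed convex pointed cone with nonempty interior. -/
structure IsProperCone {m : ℕ} (K : Set (EucSp m)) : Prop where
  isClosed : IsClosed K
  convex : Convex ℝ K
  smul_mem : ∀ c : ℝ, 0 ≤ c → ∀ x ∈ K, c • x ∈ K
  pointed : ∀ x ∈ K, -x ∈ K → x = 0
  solid : (interior K).Nonempty

/-- A matrix `A` leaves a cone `K` invariant: `A K ⊆ K`. -/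
def LeavesInv {m : ℕ} (A : Matrix (Fin m) (Fin m) ℝ) (K : Set (EucSp m)) : Prop :=
  ∀ x ∈ K, Matrix.toEuclideanLin A x ∈ K

/-- A set of matrices leaves a cone invariant if each of its members does. -/
def SetLeavesInv {m : ℕ} (S : Set (Matrix (Fin m) (Fin m) ℝ)) (K : Set (EucSp m)) : Prop :=
  ∀ A ∈ S, LeavesInv A K

/-- `π(K)`: the set of matrices leaving the cone `K` invariant. -/
def piCone {m : ℕ} (K : Set (EucSp m)) : Set (Mat m) := {A | LeavesInv A K}

/-- Distance (valued in `ℝ≥0∞`, with `d(A, ∅) = ∞`) from a matrix to a set of matrices, in the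
operator norm. -/
def edistSet {m : ℕ} (A : Mat m) (S : Set (Mat m)) : ℝ≥0∞ :=
  ⨅ B ∈ S, ENNReal.ofReal (opNorm (A - B))

/-- Hausdorff distance between two sets of matrices (operator norm, valued in `ℝ≥0∞`). -/
def hausdorffDistE {m : ℕ} (S T : Set (Mat m)) : ℝ≥0∞ :=
  max (⨆ A ∈ S, edistSet A T) (⨆ B ∈ T, edistSet B S)

/-- `S_M = {A : A − M leaves K invariant}`, i.e. `{A : A ≥^K M}`. -/
def matSSet {m : ℕ} (K : Set (EucSp m)) (M : Mat m) : Set (Mat m) :=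
  {A | LeavesInv (A - M) K}

/-- `π_r = {M ∈ π(K) : d(M, ∂π(K)) ≥ r}`. -/
def piConeR {m : ℕ} (K : Set (EucSp m)) (r : ℝ) : Set (Mat m) :=
  {M | M ∈ piCone K ∧ ENNReal.ofReal r ≤ edistSet M (frontier (piCone K))}

/-- `M_r = (π_r ∩ supp μ_c) ∪ supp μ_s`. -/
def MrSet {m : ℕ} (K : Set (EucSp m)) (μc μs : Measure (Mat m)) (r : ℝ) : Set (Mat m) :=
  (piConeR K r ∩ msupport μc) ∪ msupport μs

/-- The measure `ν` is zero or a finite linear combination (with positive coefficients) of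
Dirac measures. -/
def IsFiniteDiracComb {m : ℕ} (ν : Measure (Mat m)) : Prop :=
  ν = 0 ∨ ∃ (N : ℕ) (w : Fin N → ℝ) (Ms : Fin N → Mat m),
    (∀ i, 0 < w i) ∧ ν = ∑ i, ENNReal.ofReal (w i) • Measure.dirac (Ms i)

/-- The `p`-th Kronecker power of a square matrix (with `A^{⊗0} = 1`, `A^{⊗(p+1)} = A^{⊗p} ⊗ A`). -/
def kronPow {m : ℕ} (A : Matrix (Fin m) (Fin m) ℝ) :
    (p : ℕ) → Matrix (Fin (m ^ p)) (Fin (m ^ p)) ℝ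
  | 0 => 1
  | p + 1 =>
    Matrix.reindex (finProdFinEquiv.trans (finCongr (pow_succ m p).symm))
      (finProdFinEquiv.trans (finCongr (pow_succ m p).symm))
      (Matrix.kroneckerMap (· * ·) (kronPow A p) A)

/-- The `q`-th Kronecker power of a vector. -/
def vecKronPow {m : ℕ} (x : EucSp m) : (q : ℕ) → EucSp (m ^ q)
  | 0 => WithLp.toLp 2 fun _ => 1
  | q + 1 => WithLp.toLp 2 fun i =>
      vecKronPow x q (finProdFinEquiv.symm (finCongr (pow_succ m q) i)).1 *
        x (finProdFinEquiv.symm (finCongr (pow_succ m q) i)).2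

/-- The spectral radius of a real square matrix: the largest modulus of a complex eigenvalue. -/
def specRad {m : ℕ} (A : Matrix (Fin m) (Fin m) ℝ) : ℝ :=
  sSup ((fun z : ℂ => ‖z‖) '' spectrum ℂ (A.map Complex.ofReal))

/-- The entrywise expectation `E[A^{⊗p}]` of the `p`-th Kronecker power under `μ`. -/
def kronExp {m : ℕ} (μ : Measure (Mat m)) (p : ℕ) :
    Matrix (Fin (m ^ p)) (Fin (m ^ p)) ℝ :=
  Matrix.of fun i j => ∫ A, kronPow A p i j ∂μ

/-- `V` is a stochastic Lyapunov function for `μ` of degree `p` with growth rate `γ`. -/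
def IsStochLyap {m : ℕ} (μ : Measure (Mat m)) (p : ℕ) (γ : ℝ) (V : EucSp m → ℝ) : Prop :=
  (∃ C₁ : ℝ, 0 < C₁ ∧ ∃ C₂ : ℝ, 0 < C₂ ∧
    ∀ x : EucSp m, C₁ * ‖x‖ ^ p ≤ V x ∧ V x ≤ C₂ * ‖x‖ ^ p) ∧
  ∀ x : EucSp m, (∫ A, V (Matrix.toEuclideanLin A x) ∂μ) ≤ γ ^ p * V x

/-- `ν` is a norm on `ℝ^m`. -/
def IsNormFn {m : ℕ} (ν : EucSp m → ℝ) : Prop :=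
  (∀ x, 0 ≤ ν x) ∧ (∀ x, ν x = 0 ↔ x = 0) ∧
  (∀ (a : ℝ) (x : EucSp m), ν (a • x) = |a| * ν x) ∧
  (∀ x y : EucSp m, ν (x + y) ≤ ν x + ν y)

/-- `ν` is cone absolute with respect to `K`:
`ν x = inf {ν (v + w) : v, w ∈ K, x = v − w}`. -/
def IsConeAbsolute {m : ℕ} (K : Set (EucSp m)) (ν : EucSp m → ℝ) : Prop :=
  ∀ x : EucSp m, ν x = sInf {r : ℝ | ∃ v ∈ K, ∃ w ∈ K, x = v - w ∧ r = ν (v + w)}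

/-- The dual cone `K* = {f : fᵀx ≥ 0 for all x ∈ K}`. -/
def dualConeSet {m : ℕ} (K : Set (EucSp m)) : Set (EucSp m) :=
  {f | ∀ x ∈ K, 0 ≤ ⟪f, x⟫}

/-- `ν` is cone linear with respect to `K`: `ν = ⟪f, ·⟫` on `K` for some `f ∈ K*`. -/
def IsConeLinear {m : ℕ} (K : Set (EucSp m)) (ν : EucSp m → ℝ) : Prop :=
  ∃ f ∈ dualConeSet K, ∀ x ∈ K, ν x = ⟪f, x⟫

/-- The matrix norm induced by a norm `ν` on `ℝ^m`. -/
def inducedNormFn {m : ℕ} (ν : EucSp m → ℝ) (A : Matrix (Fin m) (Fin m) ℝ) : ℝ :=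
  sSup {c : ℝ | ∃ x : EucSp m, x ≠ 0 ∧ c = ν (Matrix.toEuclideanLin A x) / ν x}

instance matBorelSpace (n : ℕ) : BorelSpace (Mat n) :=
  inferInstanceAs (BorelSpace (Fin n → Fin n → ℝ))

instance matSecondCountable (n : ℕ) : SecondCountableTopology (Mat n) :=
  inferInstanceAs (SecondCountableTopology (Fin n → Fin n → ℝ))

theorem opNorm_nonneg {m : ℕ} (A : Mat m) : 0 ≤ opNorm A := norm_nonneg _

theorem norm_toEuclideanLin_le {m : ℕ} (A : Mat m) (x : EucSp m) :
    ‖Matrix.toEuclideanLin A x‖ ≤ opNorm A * ‖x‖ :=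
  (LinearMap.toContinuousLinearMap (Matrix.toEuclideanLin A)).le_opNorm x

theorem toEuclideanLin_mul_apply {m : ℕ} (A B : Mat m) (x : EucSp m) :
    Matrix.toEuclideanLin (A * B) x =
      Matrix.toEuclideanLin A (Matrix.toEuclideanLin B x) := by
  simp [Matrix.toLpLin_apply, Matrix.mulVec_mulVec]

theorem toEuclideanLin_one_apply {m : ℕ} (x : EucSp m) :
    Matrix.toEuclideanLin (1 : Mat m) x = x := by
  simp

theorem opNorm_mul_le {m : ℕ} (A B : Mat m) : opNorm (A * B) ≤ opNorm A * opNorm B := by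
  refine ContinuousLinearMap.opNorm_le_bound _
    (mul_nonneg (opNorm_nonneg A) (opNorm_nonneg B)) fun x => ?_
  change ‖Matrix.toEuclideanLin (A * B) x‖ ≤ _
  rw [toEuclideanLin_mul_apply, mul_assoc]
  exact (norm_toEuclideanLin_le A _).trans
    (mul_le_mul_of_nonneg_left (norm_toEuclideanLin_le B x) (opNorm_nonneg A))

theorem opNorm_one_le {m : ℕ} : opNorm (1 : Mat m) ≤ 1 := by
  refine ContinuousLinearMap.opNorm_le_bound _ zero_le_one fun x => ?_
  change ‖Matrix.toEuclideanLin (1 : Mat m) x‖ ≤ _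
  rw [toEuclideanLin_one_apply, one_mul]

theorem continuous_opNorm {m : ℕ} : Continuous (opNorm : Mat m → ℝ) := by
  have h : Continuous ((LinearMap.toContinuousLinearMap.toLinearMap ∘ₗ
      (Matrix.toEuclideanLin (𝕜 := ℝ) (m := Fin m) (n := Fin m)).toLinearMap) :
        Mat m →ₗ[ℝ] (EucSp m →L[ℝ] EucSp m)) :=
    LinearMap.continuous_of_finiteDimensional _
  exact h.norm

theorem continuous_toEuclideanLin_apply {m : ℕ} (x : EucSp m) :
    Continuous fun A : Mat m => Matrix.toEuclideanLin A x := by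
  have h : Continuous (LinearMap.applyₗ x ∘ₗ
      (Matrix.toEuclideanLin (𝕜 := ℝ) (m := Fin m) (n := Fin m)).toLinearMap) :=
    LinearMap.continuous_of_finiteDimensional _
  exact h

theorem prodRev_zero {m : ℕ} (f : Fin 0 → Mat m) : prodRev f = 1 := by
  simp [prodRev]

theorem prodRev_cons {m k : ℕ} (A : Mat m) (f : Fin k → Mat m) :
    prodRev (Fin.cons A f : Fin (k + 1) → Mat m) = prodRev f * A := by
  simp [prodRev, List.ofFn_succ]

theorem prodRev_succ {m k : ℕ} (f : Fin (k + 1) → Mat m) :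
    prodRev f = prodRev (Fin.tail f) * f 0 := by
  rw [← prodRev_cons, Fin.cons_self_tail]

theorem continuous_prodRev {m k : ℕ} : Continuous (prodRev : (Fin k → Mat m) → Mat m) := by
  induction k with
  | zero =>
    have h : (prodRev : (Fin 0 → Mat m) → Mat m) = fun _ => 1 := funext prodRev_zero
    rw [h]
    exact continuous_const
  | succ k ih =>
    have h : (prodRev : (Fin (k + 1) → Mat m) → Mat m) =
        fun f => prodRev (Fin.tail f) * f 0 := funext prodRev_succ
    rw [h]
    have ht : Continuous fun f : Fin (k + 1) → Mat m => Fin.tail f :=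
      continuous_pi fun i => continuous_apply i.succ
    exact (ih.comp ht).mul (continuous_apply 0)

theorem opNorm_prodRev_le {m k : ℕ} {C : ℝ} (f : Fin k → Mat m)
    (hf : ∀ i, opNorm (f i) ≤ C) : opNorm (prodRev f) ≤ C ^ k := by
  induction k with
  | zero => simpa [prodRev_zero] using opNorm_one_le
  | succ k ih =>
    rw [prodRev_succ, pow_succ]
    have hC : 0 ≤ C := (opNorm_nonneg _).trans (hf 0)
    exact (opNorm_mul_le _ _).trans
      (mul_le_mul (ih _ fun i => hf i.succ) (hf 0) (opNorm_nonneg _) (pow_nonneg hC k))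

/-- A bound on the support bounds almost every matrix. -/
theorem HasBoundedSupport.exists_ae_le {m : ℕ} {μ : Measure (Mat m)}
    (h : HasBoundedSupport μ) : ∃ C : ℝ, 0 ≤ C ∧ ∀ᵐ A ∂μ, opNorm A ≤ C := by
  obtain ⟨C, hC⟩ := h
  refine ⟨max C 0, le_max_right _ _, ?_⟩
  suffices hnull : μ (msupport μ)ᶜ = 0 by
    have hae : ∀ᵐ A ∂μ, A ∈ msupport μ := hnull
    filter_upwards [hae] with A hA using (hC A hA).trans (le_max_left _ _)
  refine measure_null_of_locally_null _ fun A hA => ?_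
  simp only [msupport, Set.mem_compl_iff, Set.mem_ofPred_eq, not_forall, not_not] at hA
  obtain ⟨ε, hε, h0⟩ := hA
  refine ⟨_, mem_nhdsWithin_of_mem_nhds (IsOpen.mem_nhds ?_ ?_), h0⟩
  · exact isOpen_lt (continuous_opNorm.comp (continuous_id.sub continuous_const))
      continuous_const
  · simpa [opNorm] using hε

section Moments

variable {m : ℕ} {μ : Measure (Mat m)} [IsProbabilityMeasure μ]

theorem ae_opNorm_prodRev_le {C : ℝ} (hC : ∀ᵐ A ∂μ, opNorm A ≤ C) (k : ℕ) :
    ∀ᵐ f ∂(Measure.pi fun _ : Fin k => μ), opNorm (prodRev f) ≤ C ^ k := by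
  have h : ∀ᵐ f ∂(Measure.pi fun _ : Fin k => μ), ∀ i, opNorm (f i) ≤ C :=
    ae_all_iff.2 fun i =>
      (measurePreserving_eval (fun _ : Fin k => μ) i).quasiMeasurePreserving.ae hC
  filter_upwards [h] with f hf using opNorm_prodRev_le f hf

theorem integrable_opNorm_prodRev_pow (h : HasBoundedSupport μ) (p k : ℕ) :
    Integrable (fun f : Fin k → Mat m => opNorm (prodRev f) ^ p)
      (Measure.pi fun _ => μ) := by
  obtain ⟨C, -, hC⟩ := h.exists_ae_le
  refine Integrable.of_bound
    ((continuous_opNorm.comp continuous_prodRev).pow p).aestronglyMeasurable ((C ^ k) ^ p) ?_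
  filter_upwards [ae_opNorm_prodRev_le hC k] with f hf
  rw [Real.norm_of_nonneg (pow_nonneg (opNorm_nonneg _) p)]
  exact pow_le_pow_left₀ (opNorm_nonneg _) hf p

theorem kExpNorm_nonneg (μ : Measure (Mat m)) (p k : ℕ) : 0 ≤ kExpNorm μ p k :=
  integral_nonneg fun _ => pow_nonneg (opNorm_nonneg _) p

theorem kExpNorm_le {C : ℝ} (hC : ∀ᵐ A ∂μ, opNorm A ≤ C) (p k : ℕ) :
    kExpNorm μ p k ≤ C ^ (p * k) := by
  have h : kExpNorm μ p k ≤ ∫ _ : Fin k → Mat m, (C ^ k) ^ p ∂(Measure.pi fun _ => μ) := by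
    refine integral_mono_of_nonneg (ae_of_all _ fun _ => pow_nonneg (opNorm_nonneg _) p)
      (integrable_const _) ?_
    filter_upwards [ae_opNorm_prodRev_le hC k] with f hf
    exact pow_le_pow_left₀ (opNorm_nonneg _) hf p
  rw [integral_const, probReal_univ, one_smul, ← pow_mul, mul_comm k p] at h
  exact h

theorem norm_prodRev_apply_pow_le {k : ℕ} (p : ℕ) (f : Fin k → Mat m) (x : EucSp m) :
    ‖Matrix.toEuclideanLin (prodRev f) x‖ ^ p ≤ opNorm (prodRev f) ^ p * ‖x‖ ^ p := by
  rw [← mul_pow]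
  exact pow_le_pow_left₀ (norm_nonneg _) (norm_toEuclideanLin_le _ x) p

theorem integrable_norm_prodRev_apply_pow (h : HasBoundedSupport μ) (p k : ℕ)
    (x : EucSp m) :
    Integrable (fun f : Fin k → Mat m => ‖Matrix.toEuclideanLin (prodRev f) x‖ ^ p)
      (Measure.pi fun _ => μ) := by
  refine ((integrable_opNorm_prodRev_pow h p k).mul_const (‖x‖ ^ p)).mono'
    ((((continuous_toEuclideanLin_apply x).comp
      continuous_prodRev).norm).pow p).aestronglyMeasurable (ae_of_all _ fun f => ?_)
  rw [Real.norm_of_nonneg (pow_nonneg (norm_nonneg _) p)]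
  exact norm_prodRev_apply_pow_le p f x

/-- `E[‖A_k ⋯ A₁ x‖^p]` where `A₁, …, A_k` are i.i.d. with law `μ`. -/
def kExpApply (μ : Measure (Mat m)) (p k : ℕ) (x : EucSp m) : ℝ :=
  ∫ f : Fin k → Mat m, ‖Matrix.toEuclideanLin (prodRev f) x‖ ^ p ∂(Measure.pi fun _ => μ)

theorem kExpApply_nonneg (μ : Measure (Mat m)) (p k : ℕ) (x : EucSp m) :
    0 ≤ kExpApply μ p k x :=
  integral_nonneg fun _ => pow_nonneg (norm_nonneg _) p

theorem kExpApply_zero (p : ℕ) (x : EucSp m) : kExpApply μ p 0 x = ‖x‖ ^ p := by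
  simp only [kExpApply, prodRev_zero, toEuclideanLin_one_apply]
  rw [integral_const, probReal_univ, one_smul]

theorem kExpApply_le (h : HasBoundedSupport μ) (p k : ℕ) (x : EucSp m) :
    kExpApply μ p k x ≤ kExpNorm μ p k * ‖x‖ ^ p := by
  rw [kExpNorm, ← integral_mul_const]
  exact integral_mono (integrable_norm_prodRev_apply_pow h p k x)
    ((integrable_opNorm_prodRev_pow h p k).mul_const _)
    fun f => norm_prodRev_apply_pow_le p f x

theorem integrable_and_integral_kExpApply (h : HasBoundedSupport μ) (p k : ℕ)
    (x : EucSp m) :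
    Integrable (fun A => kExpApply μ p k (Matrix.toEuclideanLin A x)) μ ∧
      ∫ A, kExpApply μ p k (Matrix.toEuclideanLin A x) ∂μ = kExpApply μ p (k + 1) x := by
  have hmp := (measurePreserving_piFinSuccAbove (fun _ : Fin (k + 1) => μ) 0).symm
  have hval : ∀ z : Mat m × (Fin k → Mat m),
      ‖Matrix.toEuclideanLin (prodRev
        ((MeasurableEquiv.piFinSuccAbove (fun _ : Fin (k + 1) => Mat m) 0).symm z)) x‖ ^ p =
      ‖Matrix.toEuclideanLin (prodRev z.2) (Matrix.toEuclideanLin z.1 x)‖ ^ p := by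
    intro z
    have hz : (MeasurableEquiv.piFinSuccAbove (fun _ : Fin (k + 1) => Mat m) 0).symm z =
        Fin.cons z.1 z.2 := by
      simp [MeasurableEquiv.piFinSuccAbove, Fin.insertNthEquiv]
    rw [hz, prodRev_cons, toEuclideanLin_mul_apply]
  have hint : Integrable (fun z : Mat m × (Fin k → Mat m) =>
      ‖Matrix.toEuclideanLin (prodRev z.2) (Matrix.toEuclideanLin z.1 x)‖ ^ p)
      (μ.prod (Measure.pi fun _ => μ)) := by
    have := (hmp.integrable_comp_emb (MeasurableEquiv.measurableEmbedding _)).2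
      (integrable_norm_prodRev_apply_pow h p (k + 1) x)
    exact this.congr (ae_of_all _ hval)
  refine ⟨hint.integral_prod_left, ?_⟩
  have hswap := integral_prod _ hint
  have hcomp := hmp.integral_comp' (fun f : Fin (k + 1) → Mat m =>
    ‖Matrix.toEuclideanLin (prodRev f) x‖ ^ p)
  simp only [hval] at hcomp
  exact hswap.symm.trans hcomp

/-- For a rate above the nonnegative `p`-radius, the `p`th moment of the norm of a long product
decays at that rate. -/
theorem pRadius_nonneg_and_eventually_le (h : HasBoundedSupport μ) {p : ℕ} (hp : 1 ≤ p) :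
    0 ≤ pRadius μ p ∧ ∀ γ : ℝ, pRadius μ p < γ →
      ∀ᶠ k : ℕ in atTop, kExpNorm μ p k ≤ γ ^ (p * k) := by
  obtain ⟨C, hC0, hC⟩ := h.exists_ae_le
  have hroot : ∀ (k : ℕ) (a : ℝ), 1 ≤ k → 0 ≤ a →
      (a ^ (p * k)) ^ (1 / (p * k : ℝ)) = a := by
    intro k a hk ha
    rw [one_div, ← Nat.cast_mul]
    exact Real.pow_rpow_inv_natCast ha (by positivity)
  have hnn : ∀ k : ℕ, 0 ≤ kExpNorm μ p k ^ (1 / (p * k : ℝ)) :=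
    fun k => Real.rpow_nonneg (kExpNorm_nonneg μ p k) _
  have hbdd : IsBoundedUnder (· ≤ ·) atTop
      fun k : ℕ => kExpNorm μ p k ^ (1 / (p * k : ℝ)) := by
    refine ⟨C, eventually_map.2 ?_⟩
    filter_upwards [eventually_ge_atTop 1] with k hk
    calc kExpNorm μ p k ^ (1 / (p * k : ℝ))
        ≤ (C ^ (p * k)) ^ (1 / (p * k : ℝ)) :=
          Real.rpow_le_rpow (kExpNorm_nonneg μ p k) (kExpNorm_le hC p k) (by positivity)
      _ = C := hroot k C hk hC0
  refine ⟨le_limsup_of_frequently_le (Eventually.of_forall hnn).frequently hbdd,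
    fun γ hγ => ?_⟩
  filter_upwards [eventually_lt_of_limsup_lt hγ hbdd, eventually_ge_atTop 1] with k hk hk1
  have hpk : p * k ≠ 0 := by positivity
  calc kExpNorm μ p k = (kExpNorm μ p k ^ (1 / (p * k : ℝ))) ^ (p * k) := by
        rw [one_div, ← Nat.cast_mul, Real.rpow_inv_natCast_pow (kExpNorm_nonneg μ p k) hpk]
    _ ≤ γ ^ (p * k) := pow_le_pow_left₀ (hnn k) hk.le _

end Moments

/-- If `Σ_μ` is exponentially stable in `p`th mean (equivalently `ρ_{p,μ} < 1`),
then for every `γ ∈ (ρ_{p,μ}, 1)` the function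
`V(x) = Σ_{k=0}^{k₀−1} E[‖A_k⋯A₁x‖^p]/γ^{pk}` (for a suitable `k₀ ≥ 1`, empty product being
the identity) is a stochastic Lyapunov function for `μ` of degree `p` with growth rate `γ`. -/
theorem stmt16 (n : ℕ) (hn : 1 ≤ n) (μ : Measure (Mat n)) [IsProbabilityMeasure μ]
    (hbdd : HasBoundedSupport μ) (p : ℕ) (hp : 1 ≤ p)
    (hstab : pRadius μ p < 1) (γ : ℝ) (hγl : pRadius μ p < γ) (hγ1 : γ < 1) :
    ∃ k₀ : ℕ, 0 < k₀ ∧ IsStochLyap μ p γ (fun x : EucSp n =>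
      ∑ k ∈ Finset.range k₀,
        (∫ f : Fin k → Mat n, ‖Matrix.toEuclideanLin (prodRev f) x‖ ^ p
            ∂(Measure.pi fun _ => μ)) / γ ^ (p * k)) := by
  obtain ⟨hρ, hev⟩ := pRadius_nonneg_and_eventually_le hbdd hp
  have hγ0 : 0 < γ := hρ.trans_lt hγl
  obtain ⟨k₀, hk₀, hk₀pos⟩ := ((hev γ hγl).and (eventually_ge_atTop 1)).exists
  refine ⟨k₀, hk₀pos, ?_⟩
  change IsStochLyap μ p γ fun x => ∑ k ∈ Finset.range k₀, kExpApply μ p k x / γ ^ (p * k)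
  have hlow : ∀ x : EucSp n,
      ‖x‖ ^ p ≤ ∑ k ∈ Finset.range k₀, kExpApply μ p k x / γ ^ (p * k) := by
    intro x
    have h := Finset.single_le_sum (f := fun k => kExpApply μ p k x / γ ^ (p * k))
      (fun k _ => div_nonneg (kExpApply_nonneg μ p k x) (by positivity))
      (Finset.mem_range.2 hk₀pos)
    simpa [kExpApply_zero] using h
  refine ⟨⟨1, one_pos, (∑ k ∈ Finset.range k₀, kExpNorm μ p k / γ ^ (p * k)) + 1, ?_,
    fun x => ⟨by simpa using hlow x, ?_⟩⟩, fun x => ?_⟩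
  · have : 0 ≤ ∑ k ∈ Finset.range k₀, kExpNorm μ p k / γ ^ (p * k) :=
      Finset.sum_nonneg fun k _ => div_nonneg (kExpNorm_nonneg μ p k) (by positivity)
    linarith
  · have h : ∑ k ∈ Finset.range k₀, kExpApply μ p k x / γ ^ (p * k) ≤
        (∑ k ∈ Finset.range k₀, kExpNorm μ p k / γ ^ (p * k)) * ‖x‖ ^ p := by
      rw [Finset.sum_mul]
      refine Finset.sum_le_sum fun k _ => ?_
      rw [div_mul_eq_mul_div]
      exact div_le_div_of_nonneg_right (kExpApply_le hbdd p k x) (by positivity)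
    have : 0 ≤ ‖x‖ ^ p := by positivity
    linarith
  · have hE : ∫ A, ∑ k ∈ Finset.range k₀,
        kExpApply μ p k (Matrix.toEuclideanLin A x) / γ ^ (p * k) ∂μ =
        γ ^ p * ∑ k ∈ Finset.range k₀, kExpApply μ p (k + 1) x / γ ^ (p * (k + 1)) := by
      rw [integral_finsetSum _ fun k _ =>
        (integrable_and_integral_kExpApply hbdd p k x).1.div_const _, Finset.mul_sum]
      refine Finset.sum_congr rfl fun k _ => ?_
      rw [integral_div, (integrable_and_integral_kExpApply hbdd p k x).2, mul_add, mul_one,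
        pow_add]
      field_simp
    rw [hE]
    refine mul_le_mul_of_nonneg_left ?_ (by positivity)
    have hlast : kExpApply μ p k₀ x / γ ^ (p * k₀) ≤ ‖x‖ ^ p := by
      rw [div_le_iff₀ (by positivity), mul_comm]
      exact (kExpApply_le hbdd p k₀ x).trans
        (mul_le_mul_of_nonneg_right hk₀ (by positivity))
    have hshift := Finset.sum_range_succ' (fun k => kExpApply μ p k x / γ ^ (p * k)) k₀
    rw [Finset.sum_range_succ] at hshift
    simp only [mul_zero, pow_zero, div_one, kExpApply_zero] at hshift
    linarith

end
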